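/- (Many-anyon Hardy inequality, abelian magnetic gauge.) Let N ≥ 2, α ∈ ℝ, and define the fractionality α_N := min over p ∈ {0, 1, …, N−2} of min over q ∈ ℤ of |(2p+1)α − 2q|. Then for every smooth function Φ : (ℝ²)^N → ℂ, compactly supported away from the fat diagonal △ and symmetric under permutations of the N coordinates, one has ∫_{(ℝ²)^N} ∑_{j=1}^N ‖(−i∇_j + A_j^α(x)) Φ(x)‖² dx ≥ (4 α_N² / N) ∑_{1 ≤ j < k ≤ N} ∫_{(ℝ²)^N} |Φ(x)|² / |x_j − x_k|² dx. -/

import Mathlib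

open MeasureTheory

noncomputable section

/-- Rotation of a planar vector by 90 degrees: `(v₁, v₂)^⊥ = (−v₂, v₁)`. -/
def perp2 (v : Fin 2 → ℝ) : Fin 2 → ℝ := ![-(v 1), v 0]

/-- The squared Euclidean norm of a planar vector. -/
def normSq2 (v : Fin 2 → ℝ) : ℝ := v 0 ^ 2 + v 1 ^ 2

/-- The `p`-th component of the Aharonov–Bohm-type magnetic potential felt by particle `j`:
`A_j^α(x) = α ∑_{k≠j} (x_j − x_k)^⊥ / |x_j − x_k|²`. -/
def abPotential (N : ℕ) (α : ℝ) (j : Fin N) (p : Fin 2)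
    (x : Fin N → Fin 2 → ℝ) : ℝ :=
  α * ∑ k ∈ Finset.univ.erase j, perp2 (x j - x k) p / normSq2 (x j - x k)

/-- The fat diagonal in `(ℝ²)^N`. -/
def fatDiagonal (N : ℕ) : Set (Fin N → Fin 2 → ℝ) :=
  {x | ∃ j k, j ≠ k ∧ x j = x k}

/-- The fractionality `α_N = min_{p ∈ {0,…,N−2}} min_{q ∈ ℤ} |(2p+1)α − 2q|`. -/
def fractionality (N : ℕ) (α : ℝ) : ℝ :=
  sInf {t : ℝ | ∃ p : ℕ, p ≤ N - 2 ∧ ∃ q : ℤ, t = |(2 * (p : ℝ) + 1) * α - 2 * q|}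

/-! The half turn exchanging particles `j` and `k` about their midpoint preserves volume, and by
symmetry `Φ` is periodic along it. If the circle described by the pair encloses `p` other particles,
the magnetic potential has mean `(2p+1)α` along it, while the Fourier frequencies of `Φ` are even
integers; after gauging the potential to its mean, Parseval's identity bounds the angular part of
`(D_j - D_k)Φ` from below by the fractionality. Averaging over all such orbits gives a Hardy
inequality for the pair `j`, `k`, and the pairs are summed with
`∑_{j<k} |D_j - D_k|² = N ∑_j |D_j|² - |∑_j D_j|²`. -/

open Complex
open scoped Real

/-! ### Magnetic Poincaré inequality on a circle -/

section Circle

variable {a b : ℝ}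

lemma fourierCoeffOn_deriv_of_eq (hab : a < b) {f f' : ℝ → ℂ}
    (hf : ∀ t ∈ Set.uIcc a b, HasDerivAt f (f' t) t) (hf' : IntervalIntegrable f' volume a b)
    (hper : f b = f a) (n : ℤ) :
    fourierCoeffOn hab f' n = 2 * π * I * n / (b - a : ℝ) * fourierCoeffOn hab f n := by
  rcases eq_or_ne n 0 with rfl | hn
  · rw [fourierCoeffOn_eq_integral]
    simp [intervalIntegral.integral_eq_sub_of_hasDerivAt hf hf', hper]
  · have hba : (b : ℂ) - a ≠ 0 := by exact_mod_cast (sub_pos.2 hab).ne'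
    have hn' : (n : ℂ) ≠ 0 := by exact_mod_cast hn
    rw [fourierCoeffOn_of_hasDerivAt hab hn hf hf', hper]
    push_cast
    field_simp [Real.pi_ne_zero]
    simp

lemma fourierCoeffOn_add (hab : a < b) {f g : ℝ → ℂ} (hf : IntervalIntegrable f volume a b)
    (hg : IntervalIntegrable g volume a b) (n : ℤ) :
    fourierCoeffOn hab (fun t ↦ f t + g t) n = fourierCoeffOn hab f n + fourierCoeffOn hab g n := by
  have hfour : Continuous fun t : ℝ ↦ fourier (-n) (t : AddCircle (b - a)) :=
    (map_continuous _).comp (AddCircle.continuous_mk' _)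
  simp only [fourierCoeffOn_eq_integral, smul_eq_mul, mul_add]
  rw [← smul_add, ← intervalIntegral.integral_add (hf.continuousOn_mul hfour.continuousOn)
    (hg.continuousOn_mul hfour.continuousOn)]

lemma memLp_restrict_Ioc_of_continuous {E : Type*} [NormedAddCommGroup E]
    {f : ℝ → E} (hf : Continuous f) (p : ENNReal) :
    MemLp f p (volume.restrict (Set.Ioc a b)) := by
  obtain ⟨C, hC⟩ := isCompact_Icc.exists_bound_of_continuousOn (hf.continuousOn (s := Set.Icc a b))
  refine .of_bound hf.aestronglyMeasurable C ?_
  filter_upwards [ae_restrict_mem measurableSet_Ioc] with t ht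
  exact hC t (Set.Ioc_subset_Icc_self ht)

lemma sq_mul_integral_norm_sq_le_of_const_potential (hab : a < b) {w w' : ℝ → ℂ}
    (hw : ∀ t, HasDerivAt w (w' t) t) (hw' : Continuous w') (hper : w b = w a) {c m : ℝ}
    (hm : 0 ≤ m) (hmc : ∀ n : ℤ, m ≤ |c + 2 * π * n / (b - a)|) :
    m ^ 2 * ∫ t in a..b, ‖w t‖ ^ 2 ≤ ∫ t in a..b, ‖-I * w' t + c * w t‖ ^ 2 := by
  have hwc : Continuous w := continuous_iff_continuousAt.2 fun t ↦ (hw t).continuousAt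
  have hDw : Continuous fun t ↦ -I * w' t + c * w t := by fun_prop
  have hcoeff (n : ℤ) : fourierCoeffOn hab (fun t ↦ -I * w' t + c * w t) n =
      (c + 2 * π * n / (b - a) : ℝ) * fourierCoeffOn hab w n := by
    rw [fourierCoeffOn_add hab (Continuous.intervalIntegrable (by fun_prop) _ _)
      (Continuous.intervalIntegrable (by fun_prop) _ _), fourierCoeffOn.const_mul,
      fourierCoeffOn.const_mul,
      fourierCoeffOn_deriv_of_eq hab (fun t _ ↦ hw t) (hw'.intervalIntegrable _ _) hper]
    push_cast
    linear_combination (-(2 * π * n / (b - a)) * fourierCoeffOn hab w n) * I_mul_I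
  have hle := hasSum_le (fun n ↦ ?_)
    ((hasSum_sq_fourierCoeffOn hab (memLp_restrict_Ioc_of_continuous hwc 2)).mul_left (m ^ 2))
    (hasSum_sq_fourierCoeffOn hab (memLp_restrict_Ioc_of_continuous hDw 2))
  · rw [smul_eq_mul, smul_eq_mul, mul_left_comm] at hle
    exact le_of_mul_le_mul_left hle (inv_pos.2 (sub_pos.2 hab))
  · rw [hcoeff, norm_mul, mul_pow, norm_real, Real.norm_eq_abs]
    gcongr
    exact hmc n

/-- The gauge factor `exp (i ∫ₐᵗ (A - c))` makes the potential constant without destroying the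
periodicity, because `c` is the mean of `A`. -/
lemma sq_mul_integral_norm_sq_le_of_potential (hab : a < b) {u u' : ℝ → ℂ} {A : ℝ → ℝ}
    (hu : ∀ t, HasDerivAt u (u' t) t) (hu' : Continuous u') (hA : Continuous A) (hper : u b = u a)
    {c m : ℝ} (hc : ∫ t in a..b, A t = (b - a) * c) (hm : 0 ≤ m)
    (hmc : ∀ n : ℤ, m ≤ |c + 2 * π * n / (b - a)|) :
    m ^ 2 * ∫ t in a..b, ‖u t‖ ^ 2 ≤ ∫ t in a..b, ‖-I * u' t + A t * u t‖ ^ 2 := by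
  set θ : ℝ → ℝ := fun t ↦ ∫ s in a..t, (A s - c)
  set E : ℝ → ℂ := fun t ↦ exp (θ t * I)
  have hθ (t : ℝ) : HasDerivAt θ (A t - c) t :=
    ((hA.sub continuous_const).integral_hasStrictDerivAt a t).hasDerivAt
  have hE (t : ℝ) : HasDerivAt E (E t * ((A t - c : ℝ) * I)) t :=
    ((hθ t).ofReal_comp.mul_const I).cexp
  have hE_norm (t : ℝ) : ‖E t‖ = 1 := norm_exp_ofReal_mul_I _
  have hE_per : E b = E a := by
    have hθb : θ b = 0 := by
      simp [θ, intervalIntegral.integral_sub (hA.intervalIntegrable a b), hc]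
    have hθa : θ a = 0 := intervalIntegral.integral_same
    simp only [E, hθa, hθb]
  have hE_cont : Continuous E := continuous_iff_continuousAt.2 fun t ↦ (hE t).continuousAt
  have hu_cont : Continuous u := continuous_iff_continuousAt.2 fun t ↦ (hu t).continuousAt
  have hgauge (t : ℝ) : -I * (E t * ((A t - c : ℝ) * I) * u t + E t * u' t) + c * (E t * u t) =
      E t * (-I * u' t + A t * u t) := by
    push_cast
    linear_combination (-(E t * (A t - c) * u t)) * I_mul_I
  simpa only [Pi.mul_apply, hgauge, norm_mul, hE_norm, one_mul] using
    sq_mul_integral_norm_sq_le_of_const_potential hab (fun t ↦ (hE t).mul (hu t)) (by fun_prop)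
      (by simp only [Pi.mul_apply, hE_per, hper]) hm hmc

end Circle

/-! ### Winding numbers -/

section Winding

lemma circleIntegral_sub_inv_eq_ite {c w : ℂ} {R : ℝ} (hR : 0 ≤ R)
    (hw : w ∉ Metric.sphere c R) :
    ∮ z in C(c, R), (z - w)⁻¹ = if dist w c < R then 2 * π * I else 0 := by
  split_ifs with hball
  · exact circleIntegral.integral_sub_inv_of_mem_ball hball
  · have hne (z : ℂ) (hz : z ∈ Metric.closedBall c R) : z - w ≠ 0 := by
      rintro h
      rw [sub_eq_zero.1 h, ← Metric.ball_union_sphere] at hz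
      exact hz.elim hball hw
    have hdiff : DifferentiableOn ℂ (fun z ↦ (z - w)⁻¹) (Metric.closedBall c R) :=
      (differentiableOn_id.sub_const w).inv hne
    exact (hdiff.mono Metric.closure_ball_subset_closedBall).diffContOnCl.circleIntegral_eq_zero hR

lemma integral_exp_div_exp_sub {a : ℂ} (ha : ‖a‖ ≠ 1) :
    ∫ t in (0 : ℝ)..2 * π, exp (t * I) / (exp (t * I) - a) =
      if ‖a‖ < 1 then 2 * (π : ℂ) else 0 := by
  have h := circleIntegral_sub_inv_eq_ite (c := 0) zero_le_one (w := a) (by simpa using ha)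
  simp only [circleIntegral, deriv_circleMap, circleMap_zero, smul_eq_mul, ofReal_one, one_mul,
    dist_zero_right, mul_right_comm _ I, ← div_eq_mul_inv] at h
  rw [intervalIntegral.integral_mul_const] at h
  apply mul_right_cancel₀ I_ne_zero
  rw [h, ite_mul, zero_mul]

/-- The angular component, at `z`, of the field of two unit vortices placed at `y` and `-y`. -/
def antipodalFlux (y z : ℂ) : ℝ := (z / (z - y) + z / (z + y)).re

variable {r y : ℂ}

lemma continuous_antipodalFlux_exp_mul (h : ‖y‖ ≠ ‖r‖) :
    Continuous fun t : ℝ ↦ antipodalFlux y (exp (t * I) * r) := by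
  have hne {s : ℂ} (hs : ‖s‖ = ‖y‖) (t : ℝ) : exp (t * I) * r ≠ s := by
    rintro rfl
    simp [norm_exp_ofReal_mul_I, h.symm] at hs
  have hsub (t : ℝ) := sub_ne_zero.2 (hne rfl t)
  have hadd (t : ℝ) : exp (t * I) * r + y ≠ 0 := fun h0 ↦
    hne (norm_neg y) t (eq_neg_of_add_eq_zero_left h0)
  unfold antipodalFlux
  fun_prop (disch := assumption)

lemma antipodalFlux_mul {z : ℂ} (hr : r ≠ 0) (hz : z ^ 2 ≠ (y / r) ^ 2) :
    antipodalFlux y (z * r) = 2 * (z ^ 2 / (z ^ 2 - (y / r) ^ 2)).re := by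
  have hprod : (z * r - y) * (z * r + y) = r ^ 2 * (z ^ 2 - (y / r) ^ 2) := by
    field_simp
    ring
  have hz' := sub_ne_zero.2 hz
  have hne := mul_ne_zero_iff.1 (hprod ▸ mul_ne_zero (pow_ne_zero 2 hr) hz')
  rw [antipodalFlux, div_add_div _ _ hne.1 hne.2, hprod, ← re_ofReal_mul]
  congr 1
  push_cast
  field_simp
  ring

/-- Half a turn of `z` is a full turn of `z ^ 2` around `y ^ 2`. -/
lemma integral_antipodalFlux_exp_mul (h : ‖y‖ ≠ ‖r‖) :
    ∫ t in (0 : ℝ)..π, antipodalFlux y (exp (t * I) * r) =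
      if ‖y‖ < ‖r‖ then 2 * π else 0 := by
  rcases eq_or_ne r 0 with rfl | hr
  · simp [antipodalFlux]
  have hr' : 0 < ‖r‖ := norm_pos_iff.2 hr
  set q : ℂ := (y / r) ^ 2
  have hq : ‖q‖ = (‖y‖ / ‖r‖) ^ 2 := by simp [q]
  have hq_lt : ‖q‖ < 1 ↔ ‖y‖ < ‖r‖ := by
    rw [hq, sq_lt_one_iff₀ (by positivity), div_lt_one hr']
  have hq_ne : ‖q‖ ≠ 1 := by
    rwa [hq, Ne, pow_eq_one_iff_of_nonneg (by positivity) two_ne_zero, div_eq_one_iff_eq hr'.ne']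
  set g : ℝ → ℂ := fun t ↦ exp (t * I) / (exp (t * I) - q)
  have hne (t : ℝ) : exp (t * I) - q ≠ 0 := by
    intro h0
    apply hq_ne
    rw [← sub_eq_zero.1 h0, norm_exp_ofReal_mul_I]
  have hg : Continuous g := by fun_prop (disch := assumption)
  have hflux (t : ℝ) : antipodalFlux y (exp (t * I) * r) = 2 * (g (2 * t)).re := by
    have hsq : exp ((2 * t : ℝ) * I) = exp (t * I) ^ 2 := by
      rw [← exp_nat_mul]
      push_cast
      ring_nf
    rw [antipodalFlux_mul hr (hsq ▸ sub_ne_zero.1 (hne (2 * t))), ← hsq]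
  simp_rw [hflux]
  rw [intervalIntegral.integral_const_mul,
    intervalIntegral.integral_comp_mul_left (fun t ↦ (g t).re) two_ne_zero, mul_zero]
  have hre : ∫ t in (0 : ℝ)..2 * π, (g t).re = (∫ t in (0 : ℝ)..2 * π, g t).re :=
    reCLM.intervalIntegral_comp_comm (hg.intervalIntegrable _ _)
  rw [hre, integral_exp_div_exp_sub hq_ne]
  simp only [hq_lt]
  split_ifs <;> simp

end Winding

/-! ### Linear algebra and averages -/

lemma det_one_add_comp_comm {R M M' : Type*} [CommRing R] [AddCommGroup M] [Module R M]
    [Module.Free R M] [Module.Finite R M] [AddCommGroup M'] [Module R M'] [Module.Free R M']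
    [Module.Finite R M'] (f : M' →ₗ[R] M) (g : M →ₗ[R] M') :
    LinearMap.det (1 + f ∘ₗ g) = LinearMap.det (1 + g ∘ₗ f) := by
  classical
  let b := Module.Free.chooseBasis R M
  let b' := Module.Free.chooseBasis R M'
  rw [← LinearMap.det_toMatrix b, ← LinearMap.det_toMatrix b', map_add, map_add,
    LinearMap.toMatrix_one, LinearMap.toMatrix_one, LinearMap.toMatrix_comp b b' b,
    LinearMap.toMatrix_comp b' b b', Matrix.det_one_add_mul_comm]

section Average

variable {Ω X E : Type*} [MeasurableSpace Ω] [MeasurableSpace X] {ν : Measure Ω} {μ : Measure X}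
  [IsFiniteMeasure ν] [SFinite μ] [NormedAddCommGroup E] {T : Ω → X → X} {F : X → E}

lemma integrable_uncurry_comp (hTm : Measurable (Function.uncurry T))
    (hT : ∀ ω, MeasurePreserving (T ω) μ μ) (hF : Integrable F μ) :
    Integrable (Function.uncurry fun ω x ↦ F (T ω x)) (ν.prod μ) :=
  have hskew : MeasurePreserving (fun p : Ω × X ↦ (p.1, T p.1 p.2)) (ν.prod μ) (ν.prod μ) :=
    (MeasurePreserving.id ν).skew_product hTm (.of_forall fun ω ↦ (hT ω).map_eq)
  hskew.integrable_comp_of_integrable (hF.comp_snd ν)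

lemma integral_integral_comp [NormedSpace ℝ E] [CompleteSpace E]
    (hTm : Measurable (Function.uncurry T)) (hT : ∀ ω, MeasurePreserving (T ω) μ μ)
    (hF : Integrable F μ) :
    ∫ x, ∫ ω, F (T ω x) ∂ν ∂μ = ν.real Set.univ • ∫ x, F x ∂μ := by
  have hinv (ω : Ω) : ∫ x, F (T ω x) ∂μ = ∫ x, F x ∂μ := by
    have hF' : AEStronglyMeasurable F (μ.map (T ω)) := (hT ω).map_eq.symm ▸ hF.aestronglyMeasurable
    rw [← integral_map (hT ω).aemeasurable hF', (hT ω).map_eq]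
  rw [← integral_integral_swap (integrable_uncurry_comp hTm hT hF)]
  simp only [hinv, integral_const]

lemma mul_integral_le_integral_of_ae_intervalIntegral_comp_le {T : ℝ → X → X} {a b : ℝ}
    (hab : a < b) (hTm : Measurable (Function.uncurry T))
    (hT : ∀ t, MeasurePreserving (T t) μ μ) {F G : X → ℝ} (hF : Integrable F μ)
    (hG : Integrable G μ) (c : ℝ)
    (hle : ∀ᵐ x ∂μ, c * ∫ t in a..b, F (T t x) ≤ ∫ t in a..b, G (T t x)) :
    c * ∫ x, F x ∂μ ≤ ∫ x, G x ∂μ := by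
  set ν : Measure ℝ := volume.restrict (Set.Ioc a b)
  simp only [intervalIntegral.integral_of_le hab.le] at hle
  have h := integral_mono_ae
    ((integrable_uncurry_comp (ν := ν) hTm hT hF).integral_prod_right.const_mul c)
    (integrable_uncurry_comp (ν := ν) hTm hT hG).integral_prod_right hle
  simp only [Function.uncurry_apply_pair] at h
  rw [integral_const_mul, integral_integral_comp hTm hT hF, integral_integral_comp hTm hT hG,
    smul_eq_mul, smul_eq_mul, mul_left_comm] at h
  refine le_of_mul_le_mul_left h ?_
  simp [ν, hab]

end Average

lemma ae_norm_add_ne {E : Type*} [NormedAddCommGroup E] [NormedSpace ℝ E] [FiniteDimensional ℝ E]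
    [Nontrivial E] [MeasurableSpace E] [BorelSpace E] (μ : Measure E) [μ.IsAddHaarMeasure] (a : E)
    (r : ℝ) : ∀ᵐ z ∂μ, ‖a + z‖ ≠ r := by
  have hset : {z : E | ¬ ‖a + z‖ ≠ r} = Metric.sphere (-a) r := by
    ext z
    simp [add_comm]
  rw [ae_iff, hset, Measure.addHaar_sphere]

lemma norm_sq_map_complex_le {E : Type*} [SeminormedAddCommGroup E] [NormedSpace ℝ E]
    (f : ℂ →ₗ[ℝ] E) (z : ℂ) : ‖f z‖ ^ 2 ≤ ‖z‖ ^ 2 * (‖f 1‖ ^ 2 + ‖f I‖ ^ 2) := by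
  have hz : f z = z.re • f 1 + z.im • f I := by
    rw [← map_smul, ← map_smul, ← map_add]
    simp [re_add_im]
  have hle : ‖f z‖ ≤ |z.re| * ‖f 1‖ + |z.im| * ‖f I‖ := by
    simpa only [hz, norm_smul, Real.norm_eq_abs] using norm_add_le (z.re • f 1) (z.im • f I)
  calc ‖f z‖ ^ 2 ≤ (|z.re| * ‖f 1‖ + |z.im| * ‖f I‖) ^ 2 := by gcongr
    _ ≤ (|z.re| ^ 2 + |z.im| ^ 2) * (‖f 1‖ ^ 2 + ‖f I‖ ^ 2) := by
      linarith [sq_nonneg (|z.re| * ‖f I‖ - |z.im| * ‖f 1‖)]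
    _ = ‖z‖ ^ 2 * (‖f 1‖ ^ 2 + ‖f I‖ ^ 2) := by
      rw [sq_abs, sq_abs, Complex.sq_norm, normSq_apply, sq, sq]

section Pairs

variable {ι E : Type*} [Fintype ι] [NormedAddCommGroup E] [InnerProductSpace ℝ E]

lemma sum_sum_norm_sub_sq (d : ι → E) :
    ∑ j, ∑ k, ‖d j - d k‖ ^ 2 = 2 * (Fintype.card ι * ∑ j, ‖d j‖ ^ 2 - ‖∑ j, d j‖ ^ 2) := by
  simp only [norm_sub_sq_real, Finset.sum_add_distrib, Finset.sum_sub_distrib, ← Finset.mul_sum,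
    ← inner_sum, ← sum_inner, real_inner_self_eq_norm_sq, Finset.sum_const, Finset.card_univ,
    nsmul_eq_mul]
  ring

lemma sum_sum_Ioi_norm_sub_sq_le [LinearOrder ι] [LocallyFiniteOrderTop ι]
    [LocallyFiniteOrderBot ι] (d : ι → E) :
    ∑ j, ∑ k ∈ Finset.Ioi j, ‖d j - d k‖ ^ 2 ≤ Fintype.card ι * ∑ j, ‖d j‖ ^ 2 := by
  have hpairs : 2 * ∑ j, ∑ k ∈ Finset.Ioi j, ‖d j - d k‖ ^ 2 = ∑ j, ∑ k, ‖d j - d k‖ ^ 2 := by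
    simp_rw [Finset.mul_sum]
    calc ∑ j, ∑ k ∈ Finset.Ioi j, 2 * ‖d j - d k‖ ^ 2
        = ∑ j, ∑ k ∈ Finset.Ioi j, (‖d j - d k‖ ^ 2 + ‖d k - d j‖ ^ 2) := by
          refine Finset.sum_congr rfl fun j _ ↦ Finset.sum_congr rfl fun k _ ↦ ?_
          rw [norm_sub_rev (d k), two_mul]
      _ = ∑ j, ∑ k ∈ {j}ᶜ, ‖d j - d k‖ ^ 2 :=
          Finset.sum_sum_Ioi_add_eq_sum_sum_off_diag fun k j ↦ ‖d j - d k‖ ^ 2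
      _ = ∑ j, ∑ k, ‖d j - d k‖ ^ 2 := by
          refine Finset.sum_congr rfl fun j _ ↦ ?_
          rw [Fintype.sum_eq_add_sum_compl j, sub_self, norm_zero, sq, mul_zero, zero_add]
  rw [sum_sum_norm_sub_sq] at hpairs
  linarith [sq_nonneg ‖∑ j, d j‖]

end Pairs

/-! ### Configurations and rotations of a pair -/

/-- Configurations of a family of planar particles. -/
abbrev Config (ι : Type*) : Type _ := ι → Fin 2 → ℝ

/-- The plane as `ℂ`, with `(v₁, v₂)` corresponding to `v₁ + v₂ i`. -/
def toComplex : (Fin 2 → ℝ) ≃L[ℝ] ℂ := basisOneI.equivFunL.symm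

section Plane

lemma toComplex_apply (v : Fin 2 → ℝ) : toComplex v = v 0 + v 1 * I := by
  have h : toComplex v = basisOneI.equivFun.symm v := rfl
  simp [h, Module.Basis.equivFun_symm_apply]

lemma normSq2_eq_norm_toComplex_sq (v : Fin 2 → ℝ) : normSq2 v = ‖toComplex v‖ ^ 2 := by
  rw [toComplex_apply, Complex.sq_norm, normSq_add_mul_I, normSq2]

lemma toComplex_perp2 (v : Fin 2 → ℝ) : toComplex (perp2 v) = I * toComplex v := by
  apply Complex.ext <;> simp [toComplex_apply, perp2]

end Plane

section Pair

variable {ι : Type*}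

/-- Half the displacement of particle `j` from particle `k`. -/
def relCoord (j k : ι) : Config ι →L[ℝ] ℂ :=
  (2⁻¹ : ℝ) • ((toComplex : (Fin 2 → ℝ) →L[ℝ] ℂ) ∘L (.proj j - .proj k))

/-- The position of particle `l` relative to the midpoint of particles `j` and `k`. -/
def midCoord (j k l : ι) : Config ι →L[ℝ] ℂ :=
  (toComplex : (Fin 2 → ℝ) →L[ℝ] ℂ) ∘L (.proj l - (2⁻¹ : ℝ) • (.proj j + .proj k))

variable {j k l : ι} (x : Config ι)

lemma relCoord_apply : relCoord j k x = (toComplex (x j) - toComplex (x k)) / 2 := by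
  simp [relCoord, div_eq_inv_mul]

lemma midCoord_apply :
    midCoord j k l x = toComplex (x l) - (toComplex (x j) + toComplex (x k)) / 2 := by
  simp [midCoord, div_eq_inv_mul, mul_add]

lemma normSq2_sub_eq_four_mul : normSq2 (x j - x k) = 4 * ‖relCoord j k x‖ ^ 2 := by
  rw [normSq2_eq_norm_toComplex_sq, map_sub, relCoord_apply, norm_div, div_pow,
    Complex.norm_ofNat]
  ring

variable [DecidableEq ι]

/-- The displacement which moves particle `j` by `z` and particle `k` by `-z`. -/
def pairShift (j k : ι) : ℂ →L[ℝ] Config ι :=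
  (.single ℝ (fun _ ↦ Fin 2 → ℝ) j - .single ℝ (fun _ ↦ Fin 2 → ℝ) k) ∘L
    (toComplex.symm : ℂ →L[ℝ] Fin 2 → ℝ)

lemma pairShift_apply (z : ℂ) :
    pairShift j k z = Pi.single j (toComplex.symm z) - Pi.single k (toComplex.symm z) := rfl

lemma toComplex_pairShift_left (hjk : j ≠ k) (z : ℂ) : toComplex (pairShift j k z j) = z := by
  simp [pairShift_apply, hjk]

lemma toComplex_pairShift_right (hjk : j ≠ k) (z : ℂ) : toComplex (pairShift j k z k) = -z := by
  simp [pairShift_apply, hjk.symm]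

lemma pairShift_of_ne (hlj : l ≠ j) (hlk : l ≠ k) (z : ℂ) : pairShift j k z l = 0 := by
  simp [pairShift_apply, hlj, hlk]

lemma relCoord_pairShift (hjk : j ≠ k) (z : ℂ) : relCoord j k (pairShift j k z) = z := by
  rw [relCoord_apply, toComplex_pairShift_left hjk, toComplex_pairShift_right hjk]
  ring

lemma midCoord_pairShift (hjk : j ≠ k) (hlj : l ≠ j) (hlk : l ≠ k) (z : ℂ) :
    midCoord j k l (pairShift j k z) = 0 := by
  rw [midCoord_apply, toComplex_pairShift_left hjk, toComplex_pairShift_right hjk,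
    pairShift_of_ne hlj hlk, map_zero]
  ring

/-- Rotation of particles `j` and `k` by the angle `t` about their midpoint. -/
def pairRot (j k : ι) (t : ℝ) : Config ι →L[ℝ] Config ι :=
  .id ℝ (Config ι) + pairShift j k ∘L ((exp (t * I) - 1) • relCoord j k)

lemma pairRot_apply (t : ℝ) :
    pairRot j k t x = x + pairShift j k ((exp (t * I) - 1) * relCoord j k x) := rfl

lemma relCoord_pairRot (hjk : j ≠ k) (t : ℝ) :
    relCoord j k (pairRot j k t x) = exp (t * I) * relCoord j k x := by
  rw [pairRot_apply, map_add, relCoord_pairShift hjk]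
  ring

lemma norm_relCoord_pairRot (hjk : j ≠ k) (t : ℝ) :
    ‖relCoord j k (pairRot j k t x)‖ = ‖relCoord j k x‖ := by
  rw [relCoord_pairRot x hjk, norm_mul, norm_exp_ofReal_mul_I, one_mul]

lemma midCoord_pairRot (hjk : j ≠ k) (hlj : l ≠ j) (hlk : l ≠ k) (t : ℝ) :
    midCoord j k l (pairRot j k t x) = midCoord j k l x := by
  rw [pairRot_apply, map_add, midCoord_pairShift hjk hlj hlk, add_zero]

lemma pairRot_zero : pairRot j k 0 x = x := by
  simp [pairRot_apply]

lemma pairRot_pi (hjk : j ≠ k) : pairRot j k π x = x ∘ Equiv.swap j k := by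
  funext l
  apply toComplex.injective
  rw [pairRot_apply, exp_pi_mul_I, relCoord_apply, Pi.add_apply, map_add, Function.comp_apply]
  rcases eq_or_ne l j with rfl | hlj
  · rw [toComplex_pairShift_left hjk, Equiv.swap_apply_left]
    ring
  rcases eq_or_ne l k with rfl | hlk
  · rw [toComplex_pairShift_right hjk, Equiv.swap_apply_right]
    ring
  · rw [pairShift_of_ne hlj hlk, Equiv.swap_apply_of_ne_of_ne hlj hlk, map_zero, add_zero]

lemma continuous_pairRot : Continuous fun t ↦ pairRot j k t x := by
  simp only [pairRot_apply]
  fun_prop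

lemma continuous_uncurry_pairRot : Continuous (Function.uncurry fun t x ↦ pairRot j k t x) := by
  simp only [Function.uncurry_def, pairRot_apply]
  fun_prop

lemma continuous_pairShift_pairRot (hjk : j ≠ k) :
    Continuous fun t ↦ pairShift j k (I * relCoord j k (pairRot j k t x)) := by
  simp_rw [relCoord_pairRot x hjk]
  fun_prop

variable [Finite ι]

lemma hasDerivAt_pairRot (hjk : j ≠ k) (t : ℝ) :
    HasDerivAt (fun t ↦ pairRot j k t x)
      (pairShift j k (I * relCoord j k (pairRot j k t x))) t := by
  have := Fintype.ofFinite ι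
  have hexp : HasDerivAt (fun t : ℝ ↦ exp (t * I)) (exp (t * I) * (1 * I)) t :=
    (ofRealCLM.hasDerivAt.mul_const I).cexp
  have hshift : HasDerivAt (fun t : ℝ ↦ pairShift j k ((exp (t * I) - 1) * relCoord j k x))
      (pairShift j k (exp (t * I) * (1 * I) * relCoord j k x)) t :=
    (pairShift j k).hasFDerivAt.comp_hasDerivAt t ((hexp.sub_const 1).mul_const _)
  have hvel : I * relCoord j k (pairRot j k t x) = exp (t * I) * (1 * I) * relCoord j k x := by
    rw [relCoord_pairRot x hjk]
    ring
  rw [hvel]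
  exact hshift.const_add x

/-- By the Weinstein–Aronszajn identity `det (1 + fg) = det (1 + gf)`, the determinant of the
rotation is that of multiplication by `exp (t * I)` on `ℂ`. -/
lemma det_pairRot (hjk : j ≠ k) (t : ℝ) :
    LinearMap.det (pairRot j k t : Config ι →ₗ[ℝ] Config ι) = 1 := by
  set g : Config ι →ₗ[ℝ] ℂ :=
    (((exp (t * I) - 1) • relCoord j k : Config ι →L[ℝ] ℂ) : Config ι →ₗ[ℝ] ℂ)
  have hmul : 1 + g ∘ₗ (pairShift j k : ℂ →ₗ[ℝ] Config ι) = Algebra.lmul ℝ ℂ (exp (t * I)) := by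
    refine LinearMap.ext fun z ↦ ?_
    change z + (exp (t * I) - 1) * relCoord j k (pairShift j k z) = exp (t * I) * z
    rw [relCoord_pairShift hjk]
    ring
  have hrot : (pairRot j k t : Config ι →ₗ[ℝ] Config ι) = 1 + (pairShift j k : ℂ →ₗ[ℝ] _) ∘ₗ g :=
    rfl
  rw [hrot, det_one_add_comp_comm, hmul, ← Algebra.norm_apply, Algebra.norm_complex_apply,
    normSq_eq_norm_sq, norm_exp_ofReal_mul_I, one_pow]

end Pair

section PairMeasure

variable {ι : Type*} [Fintype ι] {j k l : ι}

lemma measurePreserving_pairRot [DecidableEq ι] (hjk : j ≠ k) (t : ℝ) :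
    MeasurePreserving (pairRot j k t : Config ι → Config ι) := by
  refine ⟨(pairRot j k t).continuous.measurable, ?_⟩
  have h := Measure.map_linearMap_addHaar_eq_smul_addHaar (volume : Measure (Config ι))
    ((det_pairRot hjk t).trans_ne one_ne_zero)
  simpa [det_pairRot hjk t] using h

/-- The orbit of `x` under the rotations of the pair `j`, `k` consists of configurations without
collisions involving `j` or `k`. -/
def OffPairCircle (j k : ι) (x : Config ι) : Prop :=
  relCoord j k x ≠ 0 ∧ ∀ l, l ≠ j → l ≠ k → ‖midCoord j k l x‖ ≠ ‖relCoord j k x‖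

lemma ae_relCoord_ne_zero (hjk : j ≠ k) : ∀ᵐ x : Config ι, relCoord j k x ≠ 0 := by
  classical
  refine ae_mem_of_ae_add_linearMap_mem (pairShift j k : ℂ →ₗ[ℝ] Config ι) volume volume
    (s := {x | relCoord j k x ≠ 0})
    (isOpen_ne_fun (by fun_prop) continuous_const).measurableSet fun x ↦ ?_
  filter_upwards [ae_norm_add_ne volume (relCoord j k x) 0] with z hz
  simpa [relCoord_pairShift hjk] using hz

lemma ae_norm_midCoord_ne (hlj : l ≠ j) (hlk : l ≠ k) :
    ∀ᵐ x : Config ι, ‖midCoord j k l x‖ ≠ ‖relCoord j k x‖ := by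
  classical
  refine ae_mem_of_ae_add_linearMap_mem (LinearMap.single ℝ (fun _ ↦ Fin 2 → ℝ) l ∘ₗ
    (toComplex.symm : ℂ →ₗ[ℝ] Fin 2 → ℝ)) volume volume
    (s := {x | ‖midCoord j k l x‖ ≠ ‖relCoord j k x‖})
    (isOpen_ne_fun (by fun_prop) (by fun_prop)).measurableSet fun x ↦ ?_
  filter_upwards [ae_norm_add_ne volume (midCoord j k l x) ‖relCoord j k x‖] with z hz
  have hmid : midCoord j k l (Pi.single l (toComplex.symm z)) = z := by
    simp [midCoord_apply, hlj.symm, hlk.symm]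
  have hrel : relCoord j k (Pi.single l (toComplex.symm z)) = 0 := by
    simp [relCoord_apply, hlj.symm, hlk.symm]
  simpa [hmid, hrel] using hz

lemma ae_offPairCircle (hjk : j ≠ k) : ∀ᵐ x : Config ι, OffPairCircle j k x := by
  have hmid : ∀ᵐ x : Config ι, ∀ l, l ≠ j → l ≠ k → ‖midCoord j k l x‖ ≠ ‖relCoord j k x‖ := by
    simp only [ae_all_iff, Filter.eventually_imp_distrib_left]
    exact fun _ ↦ ae_norm_midCoord_ne
  exact (ae_relCoord_ne_zero hjk).and hmid

end PairMeasure

/-! ### The magnetic potential along the orbits of a pair -/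

section Potential

variable {N : ℕ} (α : ℝ) {j k : Fin N} (x : Config (Fin N))

/-- The magnetic potential `(A_j^α(x))_j` as a linear form on the tangent space `(ℝ²)^N`. -/
def abForm : Config (Fin N) →L[ℝ] ℝ :=
  ∑ j, ∑ p, abPotential N α j p x • (.proj p ∘L .proj j : Config (Fin N) →L[ℝ] ℝ)

lemma abForm_single (v : Fin 2 → ℝ) :
    abForm α x (Pi.single j v) = ∑ p, abPotential N α j p x * v p := by
  simp only [abForm, sum_apply, smul_apply, ContinuousLinearMap.comp_apply,
    ContinuousLinearMap.proj_apply, smul_eq_mul]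
  rw [Fintype.sum_eq_single j fun i hi ↦ by simp [hi], Pi.single_eq_same]

lemma sum_perp2_div_normSq2_mul (w v : Fin 2 → ℝ) :
    ∑ p, perp2 w p / normSq2 w * v p = (toComplex v / (I * toComplex w)).re := by
  have hw : normSq2 w = normSq (I * toComplex w) := by
    rw [normSq2_eq_norm_toComplex_sq, normSq_mul, normSq_I, one_mul, normSq_eq_norm_sq]
  rw [div_re, ← hw, ← toComplex_perp2, Fin.sum_univ_two]
  simp only [toComplex_apply, add_re, add_im, mul_re, mul_im, ofReal_re, ofReal_im, I_re, I_im,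
    mul_zero, mul_one, sub_self, add_zero, zero_add]
  ring

lemma abForm_single_toComplex_symm (z : ℂ) :
    abForm α x (Pi.single j (toComplex.symm (I * z))) =
      α * ∑ l ∈ Finset.univ.erase j, (z / (toComplex (x j) - toComplex (x l))).re := by
  simp_rw [abForm_single, abPotential, mul_assoc, ← Finset.mul_sum, Finset.sum_mul]
  rw [Finset.sum_comm]
  simp_rw [sum_perp2_div_normSq2_mul, ContinuousLinearEquiv.apply_symm_apply, map_sub,
    mul_div_mul_left _ _ I_ne_zero]

lemma abForm_pairShift (hjk : j ≠ k) (hx : relCoord j k x ≠ 0) :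
    abForm α x (pairShift j k (I * relCoord j k x)) =
      α * (1 + ∑ l ∈ (Finset.univ.erase j).erase k,
        antipodalFlux (midCoord j k l x) (relCoord j k x)) := by
  set r := relCoord j k x with hr
  have hkj : k ∈ Finset.univ.erase j := by simp [hjk.symm]
  have hjk' : j ∈ Finset.univ.erase k := by simp [hjk]
  have hleft (l : Fin N) : toComplex (x j) - toComplex (x l) = r - midCoord j k l x := by
    rw [hr, relCoord_apply, midCoord_apply]
    ring
  have hright (l : Fin N) : toComplex (x k) - toComplex (x l) = -(r + midCoord j k l x) := by
    rw [hr, relCoord_apply, midCoord_apply]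
    ring
  have hmid_left : midCoord j k j x = r := by
    rw [hr, relCoord_apply, midCoord_apply]
    ring
  have hmid_right : midCoord j k k x = -r := by
    rw [hr, relCoord_apply, midCoord_apply]
    ring
  have hhalf : (r / (r + r)).re = 1 / 2 := by
    rw [← two_mul, div_mul_cancel_right₀ hx]
    norm_num
  rw [pairShift_apply, map_sub, abForm_single_toComplex_symm, abForm_single_toComplex_symm,
    ← Finset.add_sum_erase _ _ hkj, ← Finset.add_sum_erase _ _ hjk',
    Finset.erase_right_comm (a := k)]
  simp only [hleft, hright, hmid_left, hmid_right, sub_neg_eq_add, div_neg, neg_re, hhalf,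
    antipodalFlux, add_re, Finset.sum_add_distrib, Finset.sum_neg_distrib]
  ring

variable {x}

lemma abForm_pairRot (hjk : j ≠ k) (hx : relCoord j k x ≠ 0) (t : ℝ) :
    abForm α (pairRot j k t x) (pairShift j k (I * relCoord j k (pairRot j k t x))) =
      α * (1 + ∑ l ∈ (Finset.univ.erase j).erase k,
        antipodalFlux (midCoord j k l x) (exp (t * I) * relCoord j k x)) := by
  have ht : relCoord j k (pairRot j k t x) ≠ 0 := by
    rwa [← norm_ne_zero_iff, norm_relCoord_pairRot x hjk, norm_ne_zero_iff]
  rw [abForm_pairShift α _ hjk ht, relCoord_pairRot x hjk]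
  congr 2
  refine Finset.sum_congr rfl fun l hl ↦ ?_
  simp only [Finset.mem_erase] at hl
  rw [midCoord_pairRot x hjk hl.2.1 hl.1]

lemma continuous_abForm_pairRot (hjk : j ≠ k) (hx : OffPairCircle j k x) :
    Continuous fun t : ℝ ↦
      abForm α (pairRot j k t x) (pairShift j k (I * relCoord j k (pairRot j k t x))) := by
  simp_rw [abForm_pairRot α hjk hx.1]
  refine continuous_const.mul (continuous_const.add (continuous_finsetSum _ fun l hl ↦ ?_))
  simp only [Finset.mem_erase] at hl
  exact continuous_antipodalFlux_exp_mul (hx.2 l hl.2.1 hl.1)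

/-- Exchanging the pair picks up the flux of the pair itself and twice that of each of the `p`
particles enclosed by the orbit. -/
lemma exists_integral_abForm_pairRot_eq (hjk : j ≠ k) (hx : OffPairCircle j k x) :
    ∃ p ≤ N - 2, ∫ t in (0 : ℝ)..π,
      abForm α (pairRot j k t x) (pairShift j k (I * relCoord j k (pairRot j k t x))) =
        π * ((2 * p + 1) * α) := by
  set s : Finset (Fin N) := (Finset.univ.erase j).erase k
  have hs (l : Fin N) (hl : l ∈ s) : ‖midCoord j k l x‖ ≠ ‖relCoord j k x‖ := by
    simp only [s, Finset.mem_erase] at hl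
    exact hx.2 l hl.2.1 hl.1
  have hcont (l : Fin N) (hl : l ∈ s) :
      Continuous fun t : ℝ ↦ antipodalFlux (midCoord j k l x) (exp (t * I) * relCoord j k x) :=
    continuous_antipodalFlux_exp_mul (hs l hl)
  have hsum : ∫ t in (0 : ℝ)..π, ∑ l ∈ s,
      antipodalFlux (midCoord j k l x) (exp (t * I) * relCoord j k x) =
        (s.filter fun l ↦ ‖midCoord j k l x‖ < ‖relCoord j k x‖).card * (2 * π) := by
    rw [intervalIntegral.integral_finsetSum fun l hl ↦ (hcont l hl).intervalIntegrable _ _,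
      Finset.sum_congr rfl fun l hl ↦ integral_antipodalFlux_exp_mul (hs l hl),
      ← Finset.sum_filter, Finset.sum_const, nsmul_eq_mul]
  refine ⟨(s.filter fun l ↦ ‖midCoord j k l x‖ < ‖relCoord j k x‖).card, ?_, ?_⟩
  · refine (Finset.card_filter_le _ _).trans_eq ?_
    rw [Finset.card_erase_of_mem (by simp [hjk.symm]), Finset.card_erase_of_mem (by simp)]
    simp [Nat.sub_sub]
  · simp_rw [abForm_pairRot α hjk hx.1]
    rw [intervalIntegral.integral_const_mul, intervalIntegral.integral_add
      (continuous_const.intervalIntegrable _ _)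
      ((continuous_finsetSum s hcont).intervalIntegrable _ _), hsum,
      intervalIntegral.integral_const, sub_zero, smul_eq_mul]
    ring

end Potential

section Fractionality

variable {N : ℕ} {α : ℝ}

lemma fractionality_le {p : ℕ} (hp : p ≤ N - 2) (q : ℤ) :
    fractionality N α ≤ |(2 * p + 1) * α - 2 * q| := by
  refine csInf_le ⟨0, ?_⟩ ⟨p, hp, q, rfl⟩
  rintro _ ⟨_, _, _, rfl⟩
  exact abs_nonneg _

lemma fractionality_nonneg : 0 ≤ fractionality N α := by
  refine Real.sInf_nonneg ?_
  rintro _ ⟨_, _, _, rfl⟩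
  exact abs_nonneg _

end Fractionality

/-! ### The magnetic derivative -/

section CovariantDerivative

variable {N : ℕ} {α : ℝ} {Φ : Config (Fin N) → ℂ} {j k : Fin N} {x : Config (Fin N)}

/-- The magnetic derivative `-i∇Φ + A^α Φ` at `x`, as a linear function of the direction. -/
def covDeriv (α : ℝ) (Φ : Config (Fin N) → ℂ) (x : Config (Fin N)) : Config (Fin N) →L[ℝ] ℂ :=
  -I • fderiv ℝ Φ x + (abForm α x).smulRight (Φ x)

lemma covDeriv_apply (v : Config (Fin N)) :
    covDeriv α Φ x v = -I * fderiv ℝ Φ x v + abForm α x v * Φ x := by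
  simp [covDeriv]

lemma covDeriv_single (j : Fin N) (p : Fin 2) :
    covDeriv α Φ x (Pi.single j (Pi.single p 1)) =
      -I * fderiv ℝ Φ x (Pi.single j (Pi.single p 1)) + abPotential N α j p x * Φ x := by
  rw [covDeriv_apply, abForm_single, Fintype.sum_eq_single p fun q hq ↦ by simp [hq]]
  simp

lemma isOpen_compl_fatDiagonal : IsOpen (fatDiagonal N)ᶜ := by
  have h : fatDiagonal N = ⋃ j, ⋃ k, ⋃ _ : j ≠ k, {x | x j = x k} := by
    ext x
    simp [fatDiagonal]
  rw [isOpen_compl_iff, h]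
  exact isClosed_iUnion_of_finite fun j ↦ isClosed_iUnion_of_finite fun k ↦
    isClosed_iUnion_of_finite fun _ ↦ isClosed_eq (by fun_prop) (by fun_prop)

lemma normSq2_sub_ne_zero (hjk : j ≠ k) (hx : x ∈ (fatDiagonal N)ᶜ) :
    normSq2 (x j - x k) ≠ 0 := by
  rw [normSq2_eq_norm_toComplex_sq]
  simpa [sub_eq_zero] using fun h ↦ hx ⟨j, k, hjk, h⟩

@[fun_prop]
lemma continuous_normSq2 : Continuous normSq2 := by
  unfold normSq2
  fun_prop

lemma continuousOn_abPotential (j : Fin N) (p : Fin 2) :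
    ContinuousOn (abPotential N α j p) (fatDiagonal N)ᶜ := by
  have hperp : Continuous fun v ↦ perp2 v p := by
    fin_cases p
    · exact (continuous_apply 1).neg
    · exact continuous_apply 0
  refine continuousOn_const.mul (continuousOn_finsetSum _ fun l hl ↦ ?_)
  refine ContinuousOn.div (by fun_prop) (by fun_prop) fun x ↦ normSq2_sub_ne_zero ?_
  exact (Finset.mem_erase.1 hl).1.symm

lemma continuousOn_abForm : ContinuousOn (abForm (N := N) α) (fatDiagonal N)ᶜ :=
  continuousOn_finsetSum _ fun j _ ↦ continuousOn_finsetSum _ fun p _ ↦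
    (continuousOn_abPotential j p).smul continuousOn_const

lemma continuous_covDeriv (hΦ : ContDiff ℝ 1 Φ) (hdiag : tsupport Φ ⊆ (fatDiagonal N)ᶜ) :
    Continuous (covDeriv α Φ) := by
  have hpot : ContinuousOn (fun x ↦ (abForm α x).smulRight (Φ x)) (fatDiagonal N)ᶜ :=
    ((ContinuousLinearMap.smulRightL ℝ (Config (Fin N)) ℂ).continuous.comp_continuousOn
      continuousOn_abForm).clm_apply hΦ.continuous.continuousOn
  have hsupp : tsupport (fun x ↦ (abForm α x).smulRight (Φ x)) ⊆ tsupport Φ :=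
    closure_mono fun x hx h ↦ hx (by simp [h])
  exact ((hΦ.continuous_fderiv one_ne_zero).const_smul (-I)).add
    (hpot.continuous_of_tsupport_subset isOpen_compl_fatDiagonal (hsupp.trans hdiag))

lemma hasCompactSupport_covDeriv (hcs : HasCompactSupport Φ) :
    HasCompactSupport (covDeriv α Φ) :=
  ((hcs.fderiv ℝ).smul_left (f := fun _ ↦ -I)).add
    (hcs.mono fun x hx h ↦ hx (by simp [h]))

lemma integrable_norm_sq_covDeriv_apply (hΦ : ContDiff ℝ 1 Φ) (hcs : HasCompactSupport Φ)
    (hdiag : tsupport Φ ⊆ (fatDiagonal N)ᶜ) (v : Config (Fin N)) :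
    Integrable fun x ↦ ‖covDeriv α Φ x v‖ ^ 2 := by
  refine Continuous.integrable_of_hasCompactSupport
    (((continuous_covDeriv hΦ hdiag).clm_apply continuous_const).norm.pow 2) ?_
  exact (hasCompactSupport_covDeriv hcs).comp_left (g := fun L : Config (Fin N) →L[ℝ] ℂ ↦ ‖L v‖ ^ 2)
    (by simp)

lemma integrable_norm_sq_div_normSq2_sub (hΦ : Continuous Φ) (hcs : HasCompactSupport Φ)
    (hdiag : tsupport Φ ⊆ (fatDiagonal N)ᶜ) (hjk : j ≠ k) :
    Integrable fun x ↦ ‖Φ x‖ ^ 2 / normSq2 (x j - x k) := by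
  have hcont : ContinuousOn (fun x ↦ ‖Φ x‖ ^ 2 / normSq2 (x j - x k)) (fatDiagonal N)ᶜ :=
    ContinuousOn.div (by fun_prop) (by fun_prop) fun x ↦ normSq2_sub_ne_zero hjk
  have hsupp : Function.support (fun x ↦ ‖Φ x‖ ^ 2 / normSq2 (x j - x k)) ⊆
      Function.support Φ := fun x hx h ↦ hx (by simp [h])
  exact (hcont.continuous_of_tsupport_subset isOpen_compl_fatDiagonal
    ((closure_mono hsupp).trans hdiag)).integrable_of_hasCompactSupport (hcs.mono hsupp)

end CovariantDerivative

/-! ### Hardy inequality for a pair -/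

section PairHardy

variable {N : ℕ} {α : ℝ} {Φ : Config (Fin N) → ℂ} {j k : Fin N}

/-- The magnetic energy density of `Φ` in the directions separating particles `j` and `k`. -/
def pairEnergy (α : ℝ) (Φ : Config (Fin N) → ℂ) (j k : Fin N) (x : Config (Fin N)) : ℝ :=
  ‖covDeriv α Φ x (pairShift j k 1)‖ ^ 2 + ‖covDeriv α Φ x (pairShift j k I)‖ ^ 2

lemma pairEnergy_eq_sum (x : Config (Fin N)) :
    pairEnergy α Φ j k x = ∑ p, ‖covDeriv α Φ x (Pi.single j (Pi.single p 1)) -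
      covDeriv α Φ x (Pi.single k (Pi.single p 1))‖ ^ 2 := by
  have hone : toComplex.symm 1 = Pi.single 0 1 := by
    rw [ContinuousLinearEquiv.symm_apply_eq]
    simp [toComplex_apply]
  have hI : toComplex.symm I = Pi.single 1 1 := by
    rw [ContinuousLinearEquiv.symm_apply_eq]
    simp [toComplex_apply]
  simp only [pairEnergy, pairShift_apply, map_sub, hone, hI, Fin.sum_univ_two]

lemma sum_Ioi_pairEnergy_le (x : Config (Fin N)) :
    ∑ j, ∑ k ∈ Finset.Ioi j, pairEnergy α Φ j k x ≤
      N * ∑ j, ∑ p, ‖covDeriv α Φ x (Pi.single j (Pi.single p 1))‖ ^ 2 := by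
  simp_rw [pairEnergy_eq_sum, Fin.sum_univ_two, Finset.sum_add_distrib, mul_add]
  refine add_le_add ?_ ?_
  · simpa using sum_sum_Ioi_norm_sub_sq_le
      fun j ↦ covDeriv α Φ x (Pi.single j (Pi.single 0 1))
  · simpa using sum_sum_Ioi_norm_sub_sq_le
      fun j ↦ covDeriv α Φ x (Pi.single j (Pi.single 1 1))

lemma fractionality_sq_mul_integral_pairRot_le (hΦ : ContDiff ℝ 1 Φ) (hjk : j ≠ k)
    (hsym : ∀ x, Φ (x ∘ Equiv.swap j k) = Φ x) {x : Config (Fin N)} (hx : OffPairCircle j k x) :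
    fractionality N α ^ 2 * ∫ t in (0 : ℝ)..π, ‖Φ (pairRot j k t x)‖ ^ 2 ≤
      ∫ t in (0 : ℝ)..π, ‖covDeriv α Φ (pairRot j k t x)
        (pairShift j k (I * relCoord j k (pairRot j k t x)))‖ ^ 2 := by
  set v : ℝ → Config (Fin N) := fun t ↦ pairShift j k (I * relCoord j k (pairRot j k t x))
  have hderiv (t : ℝ) : HasDerivAt (fun t ↦ Φ (pairRot j k t x))
      (fderiv ℝ Φ (pairRot j k t x) (v t)) t :=
    (hΦ.differentiable one_ne_zero _).hasFDerivAt.comp_hasDerivAt t (hasDerivAt_pairRot x hjk t)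
  have hderiv_cont : Continuous fun t ↦ fderiv ℝ Φ (pairRot j k t x) (v t) :=
    ((hΦ.continuous_fderiv one_ne_zero).comp (continuous_pairRot x)).clm_apply
      (continuous_pairShift_pairRot x hjk)
  have hper : Φ (pairRot j k π x) = Φ (pairRot j k 0 x) := by
    rw [pairRot_pi x hjk, pairRot_zero, hsym]
  obtain ⟨p, hp, hflux⟩ := exists_integral_abForm_pairRot_eq α hjk hx
  simp_rw [covDeriv_apply]
  refine sq_mul_integral_norm_sq_le_of_potential Real.pi_pos hderiv hderiv_cont
    (continuous_abForm_pairRot α hjk hx) hper (by rw [hflux, sub_zero]) fractionality_nonneg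
    fun q ↦ (fractionality_le hp (-q)).trans_eq ?_
  congr 1
  push_cast
  field_simp
  ring

lemma four_mul_fractionality_sq_mul_integral_pairRot_le (hΦ : ContDiff ℝ 1 Φ)
    (hdiag : tsupport Φ ⊆ (fatDiagonal N)ᶜ) (hjk : j ≠ k)
    (hsym : ∀ x, Φ (x ∘ Equiv.swap j k) = Φ x) {x : Config (Fin N)} (hx : OffPairCircle j k x) :
    4 * fractionality N α ^ 2 * ∫ t in (0 : ℝ)..π,
        ‖Φ (pairRot j k t x)‖ ^ 2 / normSq2 (pairRot j k t x j - pairRot j k t x k) ≤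
      ∫ t in (0 : ℝ)..π, pairEnergy α Φ j k (pairRot j k t x) := by
  have hr : 0 < ‖relCoord j k x‖ := norm_pos_iff.2 hx.1
  have hcov : Continuous fun t ↦ covDeriv α Φ (pairRot j k t x) :=
    (continuous_covDeriv hΦ hdiag).comp (continuous_pairRot x)
  have hle (t : ℝ) : ‖covDeriv α Φ (pairRot j k t x)
      (pairShift j k (I * relCoord j k (pairRot j k t x)))‖ ^ 2 ≤
        ‖relCoord j k x‖ ^ 2 * pairEnergy α Φ j k (pairRot j k t x) := by
    refine (norm_sq_map_complex_le ((covDeriv α Φ (pairRot j k t x) ∘L pairShift j k :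
      ℂ →L[ℝ] ℂ) : ℂ →ₗ[ℝ] ℂ) _).trans_eq ?_
    rw [norm_mul, norm_I, one_mul, norm_relCoord_pairRot x hjk]
    rfl
  simp_rw [normSq2_sub_eq_four_mul, norm_relCoord_pairRot x hjk, intervalIntegral.integral_div]
  refine le_of_mul_le_mul_left ?_ (pow_pos hr 2)
  calc ‖relCoord j k x‖ ^ 2 * (4 * fractionality N α ^ 2 *
        ((∫ t in (0 : ℝ)..π, ‖Φ (pairRot j k t x)‖ ^ 2) / (4 * ‖relCoord j k x‖ ^ 2)))
      = fractionality N α ^ 2 * ∫ t in (0 : ℝ)..π, ‖Φ (pairRot j k t x)‖ ^ 2 := by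
        field_simp
    _ ≤ _ := fractionality_sq_mul_integral_pairRot_le hΦ hjk hsym hx
    _ ≤ ∫ t in (0 : ℝ)..π, ‖relCoord j k x‖ ^ 2 * pairEnergy α Φ j k (pairRot j k t x) :=
        intervalIntegral.integral_mono Real.pi_pos.le
          (Continuous.intervalIntegrable
            ((hcov.clm_apply (continuous_pairShift_pairRot x hjk)).norm.pow 2) _ _)
          (Continuous.intervalIntegrable (by unfold pairEnergy; fun_prop) _ _) hle
    _ = _ := intervalIntegral.integral_const_mul _ _

lemma integrable_pairEnergy (hΦ : ContDiff ℝ 1 Φ) (hcs : HasCompactSupport Φ)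
    (hdiag : tsupport Φ ⊆ (fatDiagonal N)ᶜ) : Integrable (pairEnergy α Φ j k) :=
  (integrable_norm_sq_covDeriv_apply hΦ hcs hdiag _).add
    (integrable_norm_sq_covDeriv_apply hΦ hcs hdiag _)

lemma four_mul_fractionality_sq_mul_integral_le (hΦ : ContDiff ℝ 1 Φ) (hcs : HasCompactSupport Φ)
    (hdiag : tsupport Φ ⊆ (fatDiagonal N)ᶜ) (hjk : j ≠ k)
    (hsym : ∀ x, Φ (x ∘ Equiv.swap j k) = Φ x) :
    4 * fractionality N α ^ 2 * ∫ x, ‖Φ x‖ ^ 2 / normSq2 (x j - x k) ≤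
      ∫ x, pairEnergy α Φ j k x := by
  refine mul_integral_le_integral_of_ae_intervalIntegral_comp_le Real.pi_pos
    continuous_uncurry_pairRot.measurable (measurePreserving_pairRot hjk)
    (integrable_norm_sq_div_normSq2_sub hΦ.continuous hcs hdiag hjk)
    (integrable_pairEnergy hΦ hcs hdiag) _ ?_
  filter_upwards [ae_offPairCircle hjk] with x hx
  exact four_mul_fractionality_sq_mul_integral_pairRot_le hΦ hdiag hjk hsym hx

lemma sum_Ioi_integral_pairEnergy_le (hΦ : ContDiff ℝ 1 Φ) (hcs : HasCompactSupport Φ)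
    (hdiag : tsupport Φ ⊆ (fatDiagonal N)ᶜ) :
    ∑ j, ∑ k ∈ Finset.Ioi j, ∫ x, pairEnergy α Φ j k x ≤
      N * ∫ x, ∑ j, ∑ p, ‖covDeriv α Φ x (Pi.single j (Pi.single p 1))‖ ^ 2 := by
  have hpair (j k : Fin N) : Integrable (pairEnergy α Φ j k) := integrable_pairEnergy hΦ hcs hdiag
  have hpairs (j : Fin N) : Integrable fun x ↦ ∑ k ∈ Finset.Ioi j, pairEnergy α Φ j k x :=
    integrable_finsetSum _ fun k _ ↦ hpair j k
  have henergy : Integrable fun x ↦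
      ∑ j, ∑ p, ‖covDeriv α Φ x (Pi.single j (Pi.single p 1))‖ ^ 2 :=
    integrable_finsetSum _ fun j _ ↦ integrable_finsetSum _ fun p _ ↦
      integrable_norm_sq_covDeriv_apply hΦ hcs hdiag _
  simp_rw [← integral_finsetSum _ fun k _ ↦ hpair _ k]
  rw [← integral_finsetSum _ fun j _ ↦ hpairs j, ← integral_const_mul]
  exact integral_mono (integrable_finsetSum _ fun j _ ↦ hpairs j) (henergy.const_mul _)
    sum_Ioi_pairEnergy_le

end PairHardy

theorem hardy_abelian_anyons_general {N : ℕ} (hN : 0 < N) (α : ℝ) {Φ : Config (Fin N) → ℂ}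
    (hΦ : ContDiff ℝ 1 Φ) (hcs : HasCompactSupport Φ) (hdiag : tsupport Φ ⊆ (fatDiagonal N)ᶜ)
    (hsym : ∀ (j k : Fin N) (x : Config (Fin N)), Φ (x ∘ Equiv.swap j k) = Φ x) :
    4 * fractionality N α ^ 2 / N *
        ∑ j, ∑ k ∈ Finset.Ioi j, ∫ x, ‖Φ x‖ ^ 2 / normSq2 (x j - x k) ≤
      ∫ x, ∑ j, ∑ p, ‖-I * fderiv ℝ Φ x (Pi.single j (Pi.single p 1)) +
        (abPotential N α j p x : ℂ) * Φ x‖ ^ 2 := by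
  simp_rw [← covDeriv_single]
  rw [div_mul_eq_mul_div, div_le_iff₀' (by exact_mod_cast hN)]
  refine le_trans ?_ (sum_Ioi_integral_pairEnergy_le hΦ hcs hdiag)
  simp_rw [Finset.mul_sum]
  refine Finset.sum_le_sum fun j _ ↦ Finset.sum_le_sum fun k hk ↦ ?_
  exact four_mul_fractionality_sq_mul_integral_le hΦ hcs hdiag (Finset.mem_Ioi.1 hk).ne (hsym j k)

/-- **Many-anyon Hardy inequality (abelian magnetic gauge).**
For every smooth symmetric `Φ` compactly supported away from the fat diagonal,
`∫ ∑_j ‖(−i∇_j + A_j^α)Φ‖² ≥ (4α_N²/N) ∑_{j<k} ∫ |Φ|²/|x_j − x_k|²`. -/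
theorem hardy_abelian_anyons (N : ℕ) (hN : 2 ≤ N) (α : ℝ)
    (Φ : (Fin N → Fin 2 → ℝ) → ℂ)
    (hsmooth : ContDiff ℝ (⊤ : ℕ∞) Φ) (hcs : HasCompactSupport Φ)
    (hdiag : ∀ x ∈ fatDiagonal N, x ∉ tsupport Φ)
    (hsym : ∀ (σ : Equiv.Perm (Fin N)) (x : Fin N → Fin 2 → ℝ), Φ (x ∘ σ) = Φ x) :
    4 * fractionality N α ^ 2 / N *
        ∑ j : Fin N, ∑ k ∈ Finset.Ioi j,
          ∫ x : Fin N → Fin 2 → ℝ, ‖Φ x‖ ^ 2 / normSq2 (x j - x k) ≤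
      ∫ x : Fin N → Fin 2 → ℝ, ∑ j : Fin N, ∑ p : Fin 2,
        ‖(-Complex.I) * fderiv ℝ Φ x (Pi.single j (Pi.single p 1)) +
          (abPotential N α j p x : ℂ) * Φ x‖ ^ 2 :=
  hardy_abelian_anyons_general (by lia) α (hsmooth.of_le (by exact_mod_cast le_top)) hcs
    (fun x hx hd ↦ hdiag x hd hx) fun j k ↦ hsym (Equiv.swap j k)
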